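/- Let Δ be a smooth fan in ℝ^n with respect to the lattice ℤ^n and let C = C(e^1, e^2) be a two-dimensional cone of Δ. Then: (1) the elementary stellar subdivision _CΔ is again a smooth fan; (2) _CΔ is a subdivision of Δ: every cone of _CΔ is contained in some cone of Δ and the union of the cones of _CΔ equals the union of the cones of Δ. -/

import Mathlib

/-- The canonical embedding of `ℤ^n` into `ℝ^n`. -/
noncomputable def toR {n : ℕ} (x : Fin n → ℤ) : Fin n → ℝ := fun i => (x i : ℝ)

/-- The cone of nonnegative real linear combinations of the finite set `s` of integer
vectors. -/
noncomputable def coneOf {n : ℕ} (s : Finset (Fin n → ℤ)) : Set (Fin n → ℝ) :=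
  {v | ∃ c : (Fin n → ℤ) → ℝ, (∀ x, 0 ≤ c x) ∧ v = ∑ x ∈ s, c x • toR x}

/-- A smooth fan in `ℝ^n` with respect to the lattice `ℤ^n`. -/
def IsSmoothFan {n : ℕ} (Δ : Finset (Finset (Fin n → ℤ))) : Prop :=
  (∀ s ∈ Δ, LinearIndependent ℝ (fun x : s => toR (x : Fin n → ℤ))) ∧
  (∀ s ∈ Δ, ∃ P : Submodule ℤ (Fin n → ℤ),
      IsCompl (Submodule.span ℤ (s : Set (Fin n → ℤ))) P) ∧
  (∀ s ∈ Δ, ∀ t ⊆ s, t ∈ Δ) ∧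
  (∀ s ∈ Δ, ∀ t ∈ Δ,
      (∃ u ⊆ s, coneOf s ∩ coneOf t = coneOf u) ∧
      (∃ u ⊆ t, coneOf s ∩ coneOf t = coneOf u))

/-- The elementary stellar subdivision `_CΔ` of `Δ` along the two dimensional cone
`C = C(e^1, e^2)`: every cone `C(e^1, e^2, w^1, …, w^t)` containing `C` is replaced by the two
cones `C(e^1, e^1+e^2, w^1, …, w^t)` and `C(e^1+e^2, e^2, w^1, …, w^t)`, and all faces of
these new cones are adjoined. -/
def stellar {n : ℕ} (Δ : Finset (Finset (Fin n → ℤ))) (e1 e2 : Fin n → ℤ) :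
    Finset (Finset (Fin n → ℤ)) :=
  Δ.filter (fun s => ¬ ({e1, e2} : Finset (Fin n → ℤ)) ⊆ s) ∪
    (Δ.filter (fun s => ({e1, e2} : Finset (Fin n → ℤ)) ⊆ s)).biUnion
      (fun s => (insert (e1 + e2) (s.erase e2)).powerset ∪
        (insert (e1 + e2) (s.erase e1)).powerset)

noncomputable abbrev LL (n : ℕ) : ((Fin n → ℤ) →₀ ℝ) →ₗ[ℝ] (Fin n → ℝ) :=
  Finsupp.linearCombination ℝ (toR (n := n))

lemma toR_add {n : ℕ} (x y : Fin n → ℤ) : toR (x + y) = toR x + toR y := by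
  ext i; simp [toR]

lemma toR_inj {n : ℕ} {x y : Fin n → ℤ} (h : toR x = toR y) : x = y := by
  ext i
  have := congrFun h i
  simpa [toR] using this

lemma mem_cone {n : ℕ} (s : Finset (Fin n → ℤ)) (v : Fin n → ℝ) :
    v ∈ coneOf s ↔ ∃ a : (Fin n → ℤ) →₀ ℝ, (∀ x, x ∉ s → a x = 0) ∧ (∀ x, 0 ≤ a x) ∧
      LL n a = v := by
  constructor
  · rintro ⟨c, hc, rfl⟩
    classical
    refine ⟨Finsupp.onFinset s (fun x => if x ∈ s then c x else 0) (by
      intro x hx; by_contra h; simp [h] at hx), ?_, ?_, ?_⟩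
    · intro x hx; simp [hx]
    · intro x
      simp only [Finsupp.onFinset_apply]
      split_ifs
      · exact hc x
      · exact le_rfl
    · rw [LL, Finsupp.linearCombination_apply, Finsupp.sum_of_support_subset (s := s)]
      · apply Finset.sum_congr rfl
        intro x hx; simp [hx]
      · exact Finsupp.support_onFinset_subset
      · simp
  · rintro ⟨a, ha, h0, rfl⟩
    refine ⟨a, h0, ?_⟩
    rw [LL, Finsupp.linearCombination_apply, Finsupp.sum_of_support_subset (s := s)]
    · intro x hx
      by_contra h
      exact (Finsupp.mem_support_iff.1 hx) (ha x h)
    · simp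

lemma li_iff {n : ℕ} (s : Finset (Fin n → ℤ)) :
    LinearIndependent ℝ (fun x : s => toR (x : Fin n → ℤ)) ↔
    ∀ a : (Fin n → ℤ) →₀ ℝ, (∀ x, x ∉ s → a x = 0) → LL n a = 0 → a = 0 := by
  have h : LinearIndependent ℝ (fun x : s => toR (x : Fin n → ℤ)) ↔
    LinearIndepOn ℝ (toR (n := n)) (s : Set (Fin n → ℤ)) := Iff.rfl
  rw [h, linearIndepOn_iff]
  refine forall_congr' fun a => ?_
  rw [Finsupp.mem_supported']
  rfl

lemma li_eq {n : ℕ} {s : Finset (Fin n → ℤ)}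
    (h : LinearIndependent ℝ (fun x : s => toR (x : Fin n → ℤ)))
    {a b : (Fin n → ℤ) →₀ ℝ} (ha : ∀ x, x ∉ s → a x = 0) (hb : ∀ x, x ∉ s → b x = 0)
    (hab : LL n a = LL n b) : a = b := by
  rw [← sub_eq_zero]
  apply (li_iff s).1 h
  · intro x hx; simp [ha x hx, hb x hx]
  · rw [map_sub, hab, sub_self]

lemma li_int {n : ℕ} {s : Finset (Fin n → ℤ)}
    (h : LinearIndependent ℝ (fun x : s => toR (x : Fin n → ℤ))) :
    LinearIndependent ℤ (fun x : s => (x : Fin n → ℤ)) := by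
  let f : (Fin n → ℤ) →ₗ[ℤ] (Fin n → ℝ) :=
    { toFun := toR, map_add' := toR_add, map_smul' := by intro c x; ext i; simp [toR] }
  apply LinearIndependent.of_comp f
  exact LinearIndependent.restrict_scalars' (R := ℤ) h

lemma prim {n : ℕ} {s : Finset (Fin n → ℤ)}
    (h : LinearIndependent ℝ (fun x : s => toR (x : Fin n → ℤ)))
    (hP : ∃ P : Submodule ℤ (Fin n → ℤ),
      IsCompl (Submodule.span ℤ (s : Set (Fin n → ℤ))) P) (x : Fin n → ℤ) (hx : x ∈ s) :
    ∃ w : Fin n → ℤ, ∑ i, x i * w i = 1 := by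
  obtain ⟨P, hP⟩ := hP
  have hl := li_int h
  have key : ∃ f : (Fin n → ℤ) →ₗ[ℤ] ℤ, f x = 1 := by
    let B := Module.Basis.span hl
    have hr : Set.range (fun x : s => (x : Fin n → ℤ)) = (s : Set (Fin n → ℤ)) := by simp
    rw [← hr] at hP
    refine ⟨(B.coord ⟨x, hx⟩).comp (Submodule.projectionOnto _ P hP), ?_⟩
    have h1 : Submodule.projectionOnto _ P hP x = B ⟨x, hx⟩ := by
      have : (x : Fin n → ℤ) = ((B ⟨x, hx⟩ : Submodule.span ℤ _) : Fin n → ℤ) := by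
        simp [B, Module.Basis.span_apply]
      conv_lhs => rw [this]
      exact Submodule.projectionOnto_apply_left hP _
    simp [h1]
  obtain ⟨f, hf⟩ := key
  refine ⟨fun i => f (Pi.single i 1), ?_⟩
  have hs := congrArg f (pi_eq_sum_univ' x)
  rw [hf, map_sum] at hs
  refine Eq.trans ?_ hs.symm
  apply Finset.sum_congr rfl
  intro i _
  rw [map_smul, smul_eq_mul]

lemma prim_eq {n : ℕ} {x y : Fin n → ℤ} (hx : ∃ w : Fin n → ℤ, ∑ i, x i * w i = 1)
    (hy : ∃ w : Fin n → ℤ, ∑ i, y i * w i = 1) (c : ℝ) (hc : 0 ≤ c)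
    (h : toR y = c • toR x) : y = x := by
  obtain ⟨w, hw⟩ := hx
  obtain ⟨w', hw'⟩ := hy
  have e : ∀ w : Fin n → ℤ, ((∑ i, y i * w i : ℤ) : ℝ) = c * ((∑ i, x i * w i : ℤ) : ℝ) := by
    intro w
    push_cast
    rw [Finset.mul_sum]
    apply Finset.sum_congr rfl
    intro i _
    have := congrFun h i
    simp only [toR, Pi.smul_apply, smul_eq_mul] at this
    rw [this]; ring
  have e1 := e w
  have e2 := e w'
  rw [hw] at e1
  rw [hw', ] at e2
  set k := ∑ i, y i * w i
  set l := ∑ i, x i * w' i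
  have ck : c = k := by simpa using e1.symm
  rw [ck] at e2 hc
  have e3 : (1 : ℤ) = k * l := by exact_mod_cast e2
  have hk : 0 ≤ k := by exact_mod_cast hc
  have hk1 : k = 1 := Int.eq_one_of_mul_eq_one_right hk e3.symm
  apply toR_inj
  rw [h, ck, hk1]; simp

lemma cone_sub {n : ℕ} {u u' : Finset (Fin n → ℤ)}
    (h : LinearIndependent ℝ (fun x : u => toR (x : Fin n → ℤ)))
    (hp : ∀ x ∈ u, ∃ w : Fin n → ℤ, ∑ i, x i * w i = 1)
    (hp' : ∀ x ∈ u', ∃ w : Fin n → ℤ, ∑ i, x i * w i = 1)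
    (hc : coneOf u = coneOf u') : u ⊆ u' := by
  classical
  have single_mem : ∀ (u : Finset (Fin n → ℤ)), ∀ x ∈ u, toR x ∈ coneOf u := by
    intro u x hx
    rw [mem_cone]
    refine ⟨Finsupp.single x 1, ?_, ?_, by simp [LL]⟩
    · intro z hz
      rw [Finsupp.single_apply, if_neg]
      rintro rfl; exact hz hx
    · intro z; rw [Finsupp.single_apply]; split_ifs <;> norm_num
  intro x hx
  have h1 := single_mem u x hx
  rw [hc, mem_cone] at h1
  obtain ⟨d, hd, hd0, hdx⟩ := h1
  have h2 : ∀ y, ∃ a : (Fin n → ℤ) →₀ ℝ, y ∈ u' → ((∀ x, x ∉ u → a x = 0) ∧ (∀ x, 0 ≤ a x) ∧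
      LL n a = toR y) := by
    intro y
    by_cases hy : y ∈ u'
    · have := single_mem u' y hy
      rw [← hc, mem_cone] at this
      obtain ⟨a, ha⟩ := this
      exact ⟨a, fun _ => ha⟩
    · exact ⟨0, fun h => absurd h hy⟩
  choose c hcc using h2
  have h3 : ∑ y ∈ u', d y • c y = Finsupp.single x 1 := by
    apply li_eq h
    · intro z hz
      rw [Finsupp.finsetSum_apply]
      apply Finset.sum_eq_zero
      intro y hy
      simp [(hcc y hy).1 z hz]
    · intro z hz
      rw [Finsupp.single_apply, if_neg]
      rintro rfl; exact hz hx
    · rw [map_sum]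
      have : LL n (Finsupp.single x 1) = toR x := by simp [LL]
      rw [this, ← hdx, LL, Finsupp.linearCombination_apply,
        Finsupp.sum_of_support_subset (s := u')]
      · apply Finset.sum_congr rfl
        intro y hy
        rw [map_smul]
        congr 1
        exact (hcc y hy).2.2
      · intro y hy
        by_contra h
        exact (Finsupp.mem_support_iff.1 hy) (hd y h)
      · simp
  have h4 : ∀ z, ∑ y ∈ u', d y * c y z = (Finsupp.single x (1:ℝ)) z := by
    intro z
    rw [← h3, Finsupp.finsetSum_apply]
    simp
  have h5 : ∃ y ∈ u', d y * c y x ≠ 0 := by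
    by_contra! hh
    have := h4 x
    rw [Finset.sum_eq_zero hh] at this
    simp at this
  obtain ⟨y, hy, hyx⟩ := h5
  have h6 : c y = Finsupp.single x (c y x) := by
    ext z
    by_cases hz : z = x
    · subst hz; simp
    · have h7 := h4 z
      rw [Finsupp.single_apply, if_neg (Ne.symm hz), Finset.sum_eq_zero_iff_of_nonneg] at h7
      · have := h7 y hy
        rw [Finsupp.single_apply, if_neg (Ne.symm hz)]
        rcases mul_eq_zero.1 this with h8 | h8
        · exact absurd (by rw [h8, zero_mul]) hyx
        · exact h8
      · intro y hy
        exact mul_nonneg (hd0 y) ((hcc y hy).2.1 z)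
  have h8 : toR y = c y x • toR x := by
    rw [← (hcc y hy).2.2]
    conv_lhs => rw [h6]
    simp [LL]
  have := prim_eq (hp x hx) (hp' y hy) _ ((hcc y hy).2.1 x) h8
  rwa [← this]

lemma fan_uniq {n : ℕ} {Δ : Finset (Finset (Fin n → ℤ))} (hΔ : IsSmoothFan Δ)
    {s t : Finset (Fin n → ℤ)} (hs : s ∈ Δ) (ht : t ∈ Δ)
    {a b : (Fin n → ℤ) →₀ ℝ} (ha : ∀ x, x ∉ s → a x = 0) (hb : ∀ x, x ∉ t → b x = 0)
    (ha0 : ∀ x, 0 ≤ a x) (hb0 : ∀ x, 0 ≤ b x)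
    (hab : LL n a = LL n b) : a = b := by
  obtain ⟨h1, h2, h3, h4⟩ := hΔ
  obtain ⟨⟨u, hu, hu'⟩, ⟨w, hw, hw'⟩⟩ := h4 s hs t ht
  have huw : u ⊆ w := cone_sub (h1 u (h3 s hs u hu))
    (fun x hx => prim (h1 s hs) (h2 s hs) x (hu hx))
    (fun x hx => prim (h1 t ht) (h2 t ht) x (hw hx)) (hu'.symm.trans hw')
  have hm : LL n a ∈ coneOf s ∩ coneOf t :=
    ⟨(mem_cone _ _).2 ⟨a, ha, ha0, rfl⟩, (mem_cone _ _).2 ⟨b, hb, hb0, hab.symm⟩⟩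
  rw [hu', mem_cone] at hm
  obtain ⟨c, hc, -, hca⟩ := hm
  have e1 : c = a := li_eq (h1 s hs) (fun x hx => hc x fun h => hx (hu h)) ha hca
  have e2 : c = b := li_eq (h1 t ht) (fun x hx => hc x fun h => hx (hw (huw h))) hb
    (hca.trans hab)
  exact e1.symm.trans e2

noncomputable def corr {n : ℕ} (e1 e2 : Fin n → ℤ) : (Fin n → ℤ) →₀ ℝ :=
  Finsupp.single e1 1 + Finsupp.single e2 1 - Finsupp.single (e1 + e2) 1

lemma LL_corr {n : ℕ} (e1 e2 : Fin n → ℤ) : LL n (corr e1 e2) = 0 := by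
  simp [corr, LL, toR_add]

lemma LL_add_corr {n : ℕ} (e1 e2 : Fin n → ℤ) (a : (Fin n → ℤ) →₀ ℝ) (r : ℝ) :
    LL n (a + r • corr e1 e2) = LL n a := by
  rw [map_add, map_smul, LL_corr]; simp

lemma stellar_dom {n : ℕ} {Δ : Finset (Finset (Fin n → ℤ))} {e1 e2 : Fin n → ℤ}
    (h1 : e1 + e2 ≠ e1) (h2 : e1 + e2 ≠ e2)
    {s' : Finset (Fin n → ℤ)} (hs : s' ∈ stellar Δ e1 e2) :
    ∃ s ∈ Δ, (∀ x ∈ s', x ∈ s ∨ (x = e1 + e2 ∧ e1 ∈ s ∧ e2 ∈ s)) ∧ ¬ (e1 ∈ s' ∧ e2 ∈ s') := by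
  simp only [stellar, Finset.mem_union, Finset.mem_filter, Finset.mem_biUnion,
    Finset.mem_powerset, Finset.insert_subset_iff, Finset.singleton_subset_iff] at hs
  rcases hs with ⟨h, hh⟩ | ⟨s, ⟨hs, he1, he2⟩, h | h⟩
  · exact ⟨s', h, fun x hx => Or.inl hx, hh⟩
  · refine ⟨s, hs, ?_, ?_⟩
    · intro x hx
      have := h hx
      simp only [Finset.mem_insert, Finset.mem_erase] at this
      tauto
    · rintro ⟨-, h3⟩
      have := h h3
      simp only [Finset.mem_insert, Finset.mem_erase] at this
      have := h2.symm
      tauto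
  · refine ⟨s, hs, ?_, ?_⟩
    · intro x hx
      have := h hx
      simp only [Finset.mem_insert, Finset.mem_erase] at this
      tauto
    · rintro ⟨h3, -⟩
      have := h h3
      simp only [Finset.mem_insert, Finset.mem_erase] at this
      have := h1.symm
      tauto

lemma compl_sub {n : ℕ} {m s' : Finset (Fin n → ℤ)} (hs : s' ⊆ m)
    (h : LinearIndependent ℝ (fun x : m => toR (x : Fin n → ℤ)))
    (hP : ∃ P : Submodule ℤ (Fin n → ℤ),
      IsCompl (Submodule.span ℤ (m : Set (Fin n → ℤ))) P) :
    ∃ P : Submodule ℤ (Fin n → ℤ), IsCompl (Submodule.span ℤ (s' : Set (Fin n → ℤ))) P := by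
  classical
  obtain ⟨P, hP⟩ := hP
  have hl : LinearIndepOn ℤ id (m : Set (Fin n → ℤ)) := li_int h
  have hsup : Submodule.span ℤ (s' : Set (Fin n → ℤ)) ⊔
      Submodule.span ℤ ((m \ s' : Finset (Fin n → ℤ)) : Set (Fin n → ℤ)) =
      Submodule.span ℤ (m : Set (Fin n → ℤ)) := by
    rw [← Submodule.span_union, ← Finset.coe_union, Finset.union_sdiff_of_subset hs]
  have hd : Disjoint (Submodule.span ℤ (s' : Set (Fin n → ℤ)))
      (Submodule.span ℤ ((m \ s' : Finset (Fin n → ℤ)) : Set (Fin n → ℤ))) := by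
    have h5 := hl.mono (t := (s' : Set _) ∪ ((m \ s' : Finset _) : Set _)) (by
      rw [← Finset.coe_union, Finset.union_sdiff_of_subset hs])
    have h6 := ((linearIndepOn_id_union_iff (by
      exact_mod_cast Finset.disjoint_sdiff)).1 h5).2.2
    simpa using h6
  refine ⟨Submodule.span ℤ ((m \ s' : Finset (Fin n → ℤ)) : Set (Fin n → ℤ)) ⊔ P, ?_, ?_⟩
  · apply hd.disjoint_sup_right_of_disjoint_sup_left
    rw [hsup]; exact hP.1
  · rw [codisjoint_iff, ← sup_assoc, hsup]
    exact codisjoint_iff.1 hP.2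

lemma span_swap {n : ℕ} {s : Finset (Fin n → ℤ)} {e1 e2 : Fin n → ℤ} (hne : e1 ≠ e2)
    (h1 : e1 ∈ s) (h2 : e2 ∈ s) :
    Submodule.span ℤ ((insert (e1 + e2) (s.erase e2) : Finset (Fin n → ℤ)) :
      Set (Fin n → ℤ)) = Submodule.span ℤ (s : Set (Fin n → ℤ)) := by
  apply le_antisymm
  · rw [Submodule.span_le]
    intro x hx
    simp only [Finset.coe_insert, Finset.coe_erase, Set.mem_insert_iff, Set.mem_sdiff,
      Finset.mem_coe, Set.mem_singleton_iff] at hx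
    rcases hx with rfl | hx
    · exact Submodule.add_mem _ (Submodule.subset_span h1) (Submodule.subset_span h2)
    · exact Submodule.subset_span hx.1
  · rw [Submodule.span_le]
    intro x hx
    by_cases hx2 : x = e2
    · have : x = (e1 + e2) - e1 := by rw [hx2]; abel
      rw [this]
      apply Submodule.sub_mem
      · apply Submodule.subset_span; simp
      · apply Submodule.subset_span; simp [h1, hne]
    · apply Submodule.subset_span
      simp only [Finset.coe_insert, Finset.coe_erase, Set.mem_insert_iff, Set.mem_sdiff,
        Finset.mem_coe, Set.mem_singleton_iff]
      exact Or.inr ⟨hx, hx2⟩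

/-- The elementary stellar subdivision is a smooth subdivision. -/
theorem stmt11 {n : ℕ} (Δ : Finset (Finset (Fin n → ℤ))) (hΔ : IsSmoothFan Δ)
    (e1 e2 : Fin n → ℤ) (hne : e1 ≠ e2) (hmem : ({e1, e2} : Finset (Fin n → ℤ)) ∈ Δ) :
    IsSmoothFan (stellar Δ e1 e2) ∧
    (∀ s ∈ stellar Δ e1 e2, ∃ t ∈ Δ, coneOf s ⊆ coneOf t) ∧
    (⋃ s ∈ stellar Δ e1 e2, coneOf s) = ⋃ s ∈ Δ, coneOf s := by
  classical
  obtain ⟨f1, f2, f3, f4⟩ := id hΔ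
  have nz : ∀ e ∈ ({e1, e2} : Finset (Fin n → ℤ)), e ≠ 0 := by
    rintro e he rfl
    obtain ⟨w, hw⟩ := prim (f1 _ hmem) (f2 _ hmem) _ he
    simp at hw
  have g1 : e1 + e2 ≠ e1 := by
    intro h; exact nz e2 (by simp) (by simpa using h)
  have g2 : e1 + e2 ≠ e2 := by
    intro h; exact nz e1 (by simp) (by simpa using h)
  have k0 : corr e1 e2 (e1 + e2) = -1 := by simp [corr, Finsupp.single_apply, g1.symm, g2.symm]
  have k1 : corr e1 e2 e1 = 1 := by simp [corr, Finsupp.single_apply, g1, hne.symm]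
  have k2 : corr e1 e2 e2 = 1 := by simp [corr, Finsupp.single_apply, g2, hne]
  have kk : ∀ x, x ≠ e1 → x ≠ e2 → x ≠ e1 + e2 → corr e1 e2 x = 0 := by
    intro x h1 h2 h3
    simp [corr, Finsupp.single_apply, h1.symm, h2.symm, h3.symm]
  have e0 : ∀ s ∈ Δ, e1 + e2 ∉ s := by
    intro s hs he
    have := fan_uniq hΔ hs hmem (a := Finsupp.single (e1 + e2) 1)
      (b := Finsupp.single e1 1 + Finsupp.single e2 1)
      (by intro x hx; rw [Finsupp.single_apply, if_neg]; rintro rfl; exact hx he)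
      (by intro x hx
          simp only [Finset.mem_insert, Finset.mem_singleton, not_or] at hx
          simp [Finsupp.single_apply, Ne.symm hx.1, Ne.symm hx.2])
      (by intro x; rw [Finsupp.single_apply]; split_ifs <;> norm_num)
      (by intro x; rw [Finsupp.add_apply, Finsupp.single_apply, Finsupp.single_apply]
          split_ifs <;> norm_num)
      (by simp [LL, toR_add])
    have := DFunLike.congr_fun this (e1 + e2)
    simp [Finsupp.single_apply, g1.symm, g2.symm] at this
  -- the transfer map
  set T : ((Fin n → ℤ) →₀ ℝ) → ((Fin n → ℤ) →₀ ℝ) := fun a => a + a (e1 + e2) • corr e1 e2 with hT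
  have LT : ∀ a, LL n (T a) = LL n a := fun a => LL_add_corr e1 e2 a _
  have T0 : ∀ a, T a (e1 + e2) = 0 := by intro a; simp [hT, k0]
  have T1 : ∀ a, T a e1 = a e1 + a (e1 + e2) := by intro a; simp [hT, k1]
  have T2 : ∀ a, T a e2 = a e2 + a (e1 + e2) := by intro a; simp [hT, k2]
  have TT : ∀ a x, x ≠ e1 → x ≠ e2 → x ≠ e1 + e2 → T a x = a x := by
    intro a x h1 h2 h3; simp [hT, kk x h1 h2 h3]
  have Tnn : ∀ a : (Fin n → ℤ) →₀ ℝ, (∀ x, 0 ≤ a x) → ∀ x, 0 ≤ T a x := by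
    intro a ha x
    by_cases h1 : x = e1
    · rw [h1, T1]; exact add_nonneg (ha _) (ha _)
    by_cases h2 : x = e2
    · rw [h2, T2]; exact add_nonneg (ha _) (ha _)
    by_cases h3 : x = e1 + e2
    · rw [h3, T0]
    rw [TT a x h1 h2 h3]; exact ha x
  have Tsupp : ∀ (s' s : Finset (Fin n → ℤ)), s ∈ Δ →
      (∀ x ∈ s', x ∈ s ∨ (x = e1 + e2 ∧ e1 ∈ s ∧ e2 ∈ s)) →
      ∀ a : (Fin n → ℤ) →₀ ℝ, (∀ x, x ∉ s' → a x = 0) → ∀ x, x ∉ s → T a x = 0 := by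
    intro s' s hs hss a ha x hx
    by_cases h3 : x = e1 + e2
    · rw [h3, T0]
    have hx' : a x = 0 := by
      apply ha; intro h
      rcases hss x h with h | h
      · exact hx h
      · exact h3 h.1
    have h0 : x = e1 ∨ x = e2 → a (e1 + e2) = 0 := by
      intro hor
      apply ha; intro h
      rcases hss _ h with h | ⟨-, h, h'⟩
      · exact e0 s hs h
      · rcases hor with rfl | rfl
        · exact hx h
        · exact hx h'
    by_cases h1 : x = e1
    · rw [h1, T1, h0 (Or.inl h1), ← h1, hx', add_zero]
    by_cases h2 : x = e2
    · rw [h2, T2, h0 (Or.inr h2), ← h2, hx', add_zero]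
    rw [TT a x h1 h2 h3]; exact hx'
  have Tlast : ∀ a b : (Fin n → ℤ) →₀ ℝ, T a = T b → a (e1 + e2) = b (e1 + e2) → a = b := by
    intro a b hab h
    simp only [hT, h] at hab
    exact add_right_cancel hab
  -- linear independence
  have LI : ∀ s ∈ stellar Δ e1 e2, LinearIndependent ℝ (fun x : s => toR (x : Fin n → ℤ)) := by
    intro s' hs'
    obtain ⟨s, hs, hss, hno⟩ := stellar_dom g1 g2 hs'
    rw [li_iff]
    intro a ha hLa
    have hTa : T a = 0 := (li_iff s).1 (f1 s hs) _ (Tsupp s' s hs hss a ha) (by rw [LT, hLa])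
    have t1 := T1 a
    have t2 := T2 a
    rw [hTa] at t1 t2
    simp only [Finsupp.coe_zero, Pi.zero_apply] at t1 t2
    apply Tlast
    · rw [hTa]; simp [hT]
    · simp only [Finsupp.coe_zero, Pi.zero_apply]
      by_cases h1 : e1 ∈ s'
      · have := ha e2 (fun h => hno ⟨h1, h⟩)
        linarith
      · have := ha e1 h1
        linarith
  have UNIQ : ∀ s ∈ stellar Δ e1 e2, ∀ t ∈ stellar Δ e1 e2, ∀ a b : (Fin n → ℤ) →₀ ℝ,
      (∀ x, x ∉ s → a x = 0) → (∀ x, x ∉ t → b x = 0) → (∀ x, 0 ≤ a x) → (∀ x, 0 ≤ b x) →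
      LL n a = LL n b → a = b := by
    intro s' hs' t' ht' a b ha hb ha0 hb0 hab
    obtain ⟨s, hs, hss, hno⟩ := stellar_dom g1 g2 hs'
    obtain ⟨t, ht, htt, hno'⟩ := stellar_dom g1 g2 ht'
    have hTT : T a = T b := fan_uniq hΔ hs ht (Tsupp s' s hs hss a ha) (Tsupp t' t ht htt b hb)
      (Tnn a ha0) (Tnn b hb0) (by rw [LT, LT, hab])
    have u1 := T1 a
    have u2 := T2 a
    rw [hTT, T1] at u1
    rw [hTT, T2] at u2
    apply Tlast _ _ hTT
    have A : a e1 = 0 ∨ a e2 = 0 := by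
      by_cases h1 : e1 ∈ s'
      · exact Or.inr (ha e2 (fun h => hno ⟨h1, h⟩))
      · exact Or.inl (ha e1 h1)
    have B : b e1 = 0 ∨ b e2 = 0 := by
      by_cases h1 : e1 ∈ t'
      · exact Or.inr (hb e2 (fun h => hno' ⟨h1, h⟩))
      · exact Or.inl (hb e1 h1)
    have p1 := ha0 e1
    have p2 := ha0 e2
    have q1 := hb0 e1
    have q2 := hb0 e2
    rcases A with A | A <;> rcases B with B | B <;> linarith
  have mem1 : ∀ s ∈ Δ, e1 ∈ s → e2 ∈ s → ∀ t, (t ⊆ insert (e1 + e2) (s.erase e2) ∨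
      t ⊆ insert (e1 + e2) (s.erase e1)) → t ∈ stellar Δ e1 e2 := by
    intro s hs h1 h2 t ht
    simp only [stellar, Finset.mem_union, Finset.mem_filter, Finset.mem_biUnion,
      Finset.mem_powerset, Finset.insert_subset_iff, Finset.singleton_subset_iff]
    exact Or.inr ⟨s, ⟨hs, h1, h2⟩, ht⟩
  have cases' : ∀ s' ∈ stellar Δ e1 e2, (s' ∈ Δ ∧ ¬ (e1 ∈ s' ∧ e2 ∈ s')) ∨
      ∃ s ∈ Δ, e1 ∈ s ∧ e2 ∈ s ∧ (s' ⊆ insert (e1 + e2) (s.erase e2) ∨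
      s' ⊆ insert (e1 + e2) (s.erase e1)) := by
    intro s' hs
    simp only [stellar, Finset.mem_union, Finset.mem_filter, Finset.mem_biUnion,
      Finset.mem_powerset, Finset.insert_subset_iff, Finset.singleton_subset_iff] at hs
    rcases hs with h | ⟨s, ⟨hs, he1, he2⟩, h⟩
    · exact Or.inl h
    · exact Or.inr ⟨s, hs, he1, he2, h⟩
  have old : ∀ s ∈ Δ, ¬ (e1 ∈ s ∧ e2 ∈ s) → s ∈ stellar Δ e1 e2 := by
    intro s hs h
    simp only [stellar, Finset.mem_union, Finset.mem_filter, Finset.mem_biUnion,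
      Finset.mem_powerset, Finset.insert_subset_iff, Finset.singleton_subset_iff]
    exact Or.inl ⟨hs, h⟩
  have SUB : ∀ s ∈ stellar Δ e1 e2, ∃ t ∈ Δ, coneOf s ⊆ coneOf t := by
    intro s' hs'
    obtain ⟨s, hs, hss, hno⟩ := stellar_dom g1 g2 hs'
    refine ⟨s, hs, ?_⟩
    intro v hv
    rw [mem_cone] at hv ⊢
    obtain ⟨a, ha, ha0, hv⟩ := hv
    exact ⟨T a, Tsupp s' s hs hss a ha, Tnn a ha0, by rw [LT, hv]⟩
  have INTER : ∀ s ∈ stellar Δ e1 e2, ∀ t ∈ stellar Δ e1 e2,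
      coneOf s ∩ coneOf t = coneOf (s ∩ t) := by
    intro s hs t ht
    ext v
    rw [Set.mem_inter_iff, mem_cone, mem_cone, mem_cone]
    constructor
    · rintro ⟨⟨a, ha, ha0, hav⟩, ⟨b, hb, hb0, hbv⟩⟩
      have hab := UNIQ s hs t ht a b ha hb ha0 hb0 (hav.trans hbv.symm)
      refine ⟨a, ?_, ha0, hav⟩
      intro x hx
      by_cases h1 : x ∈ s
      · rw [hab]; apply hb; intro h2; exact hx (Finset.mem_inter.2 ⟨h1, h2⟩)
      · exact ha x h1
    · rintro ⟨a, ha, ha0, hav⟩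
      exact ⟨⟨a, fun x hx => ha x fun h => hx (Finset.mem_inter.1 h).1, ha0, hav⟩,
        ⟨a, fun x hx => ha x fun h => hx (Finset.mem_inter.1 h).2, ha0, hav⟩⟩
  refine ⟨⟨LI, ?_, ?_, ?_⟩, SUB, ?_⟩
  · intro s' hs'
    rcases cases' s' hs' with h | ⟨s, hs, h1, h2, h | h⟩
    · exact f2 s' h.1
    · apply compl_sub h (LI _ (mem1 s hs h1 h2 _ (Or.inl le_rfl)))
      rw [span_swap hne h1 h2]
      exact f2 s hs
    · apply compl_sub h (LI _ (mem1 s hs h1 h2 _ (Or.inr le_rfl)))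
      rw [add_comm e1 e2, span_swap hne.symm h2 h1]
      exact f2 s hs
  · intro s' hs' t ht
    rcases cases' s' hs' with h | ⟨s, hs, h1, h2, h⟩
    · exact old t (f3 s' h.1 t ht) (fun hh => h.2 ⟨ht hh.1, ht hh.2⟩)
    · exact mem1 s hs h1 h2 t (h.imp ht.trans ht.trans)
  · intro s hs t ht
    exact ⟨⟨s ∩ t, Finset.inter_subset_left, INTER s hs t ht⟩,
      ⟨s ∩ t, Finset.inter_subset_right, INTER s hs t ht⟩⟩
  · apply Set.Subset.antisymm
    · intro v hv
      simp only [Set.mem_iUnion] at hv ⊢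
      obtain ⟨s, hs, hv⟩ := hv
      obtain ⟨t, ht, hst⟩ := SUB s hs
      exact ⟨t, ht, hst hv⟩
    · intro v hv
      simp only [Set.mem_iUnion] at hv ⊢
      obtain ⟨s, hs, hv⟩ := hv
      by_cases hb : e1 ∈ s ∧ e2 ∈ s
      swap
      · exact ⟨s, old s hs hb, hv⟩
      obtain ⟨h1, h2⟩ := hb
      rw [mem_cone] at hv
      obtain ⟨a, ha, ha0, hv⟩ := hv
      have a00 := ha _ (e0 s hs)
      have main : ∀ r : ℝ, 0 ≤ r → r ≤ a e1 → r ≤ a e2 →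
          (∀ x, 0 ≤ (a + (-r) • corr e1 e2) x) ∧
          (∀ x, x ∉ s → x ≠ e1 + e2 → (a + (-r) • corr e1 e2) x = 0) := by
        intro r hr hr1 hr2
        refine ⟨fun x => ?_, fun x hx hx0 => ?_⟩
        · simp only [Finsupp.add_apply, Finsupp.smul_apply, smul_eq_mul]
          by_cases x1 : x = e1
          · rw [x1, k1]; linarith
          by_cases x2 : x = e2
          · rw [x2, k2]; linarith
          by_cases x3 : x = e1 + e2
          · rw [x3, k0, a00]; linarith
          rw [kk x x1 x2 x3]; simpa using ha0 x
        · simp only [Finsupp.add_apply, Finsupp.smul_apply, smul_eq_mul]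
          rw [kk x (by rintro rfl; exact hx h1) (by rintro rfl; exact hx h2) hx0, ha x hx]
          simp
      rcases le_total (a e1) (a e2) with hle | hle
      · obtain ⟨m1, m2⟩ := main (a e1) (ha0 _) le_rfl hle
        refine ⟨insert (e1 + e2) (s.erase e1), mem1 s hs h1 h2 _ (Or.inr le_rfl), ?_⟩
        rw [mem_cone]
        refine ⟨_, ?_, m1, by rw [LL_add_corr, hv]⟩
        intro x hx
        simp only [Finset.mem_insert, Finset.mem_erase, not_or, not_and] at hx
        by_cases x1 : x = e1
        · simp [x1, k1]
        · exact m2 x (hx.2 x1) hx.1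
      · obtain ⟨m1, m2⟩ := main (a e2) (ha0 _) hle le_rfl
        refine ⟨insert (e1 + e2) (s.erase e2), mem1 s hs h1 h2 _ (Or.inl le_rfl), ?_⟩
        rw [mem_cone]
        refine ⟨_, ?_, m1, by rw [LL_add_corr, hv]⟩
        intro x hx
        simp only [Finset.mem_insert, Finset.mem_erase, not_or, not_and] at hx
        by_cases x1 : x = e2
        · simp [x1, k2]
        · exact m2 x (hx.2 x1) hx.1
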